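/- Let f, v, p : ℝ → ℝ be smooth 2π-periodic functions satisfying on all of ℝ the system (p - 2f)' = 0, -f'' + v f' - f² - v² - 2p = 0, v' = 0, together with the zero-flux condition ∫₀^{2π} f(θ) dθ = 0. If v is not identically zero, then f ≡ 0, v is a nonzero constant, and p ≡ -v²/2. -/

import Mathlib

/-!
Since `v' = 0` and `(p - 2f)' = 0`, the angular velocity is a constant `c ≠ 0` and `p = 2f + k`, so
that `f'' = c f' - f² - 4f - c² - 2k`: a Newton equation with linear (anti-)damping. Its energy
`f'²/2 + f³/3 + 2f² + (c² + 2k) f` has derivative `c f'²`, hence divided by `c` it is monotone.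
Being also periodic it is constant (`Monotone.eq_of_periodic`), which forces `f' = 0`. The zero-flux
condition then gives `f = 0`, and the second equation of the system gives `p = -v²/2`.
-/

noncomputable section

open Real

theorem Monotone.eq_of_periodic {g : ℝ → ℝ} {T : ℝ} (hg : Monotone g) (hper : Function.Periodic g T)
    (hT : 0 < T) (x y : ℝ) : g x = g y := by
  have key : ∀ x y : ℝ, g y ≤ g x := by
    intro x y
    obtain ⟨n, hn⟩ := Archimedean.arch (y - x) hT
    calc g y ≤ g (x + n • T) := hg (by linarith)
      _ = g x := hper.nsmul n x
  exact le_antisymm (key y x) (key x y)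

theorem planar_homogeneous_system_zero_flux
    (f v p : ℝ → ℝ)
    (hf : ContDiff ℝ (⊤ : ℕ∞) f) (hv : ContDiff ℝ (⊤ : ℕ∞) v) (hp : ContDiff ℝ (⊤ : ℕ∞) p)
    (hfper : Function.Periodic f (2 * π))
    (hvper : Function.Periodic v (2 * π))
    (hpper : Function.Periodic p (2 * π))
    (h1 : ∀ θ : ℝ, deriv (fun t => p t - 2 * f t) θ = 0)
    (h2 : ∀ θ : ℝ, -(deriv (deriv f) θ) + v θ * deriv f θ
      - f θ ^ 2 - v θ ^ 2 - 2 * p θ = 0)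
    (h3 : ∀ θ : ℝ, deriv v θ = 0)
    (hflux : ∫ θ in (0:ℝ)..(2 * π), f θ = 0)
    (hvne : ¬ (∀ θ : ℝ, v θ = 0)) :
    (∀ θ : ℝ, f θ = 0) ∧
      (∃ c : ℝ, c ≠ 0 ∧ ∀ θ : ℝ, v θ = c) ∧
      (∀ θ : ℝ, p θ = -(v θ ^ 2) / 2) := by
  have hfd : Differentiable ℝ f := hf.differentiable (by simp)
  have hvd : Differentiable ℝ v := hv.differentiable (by simp)
  have hpd : Differentiable ℝ p := hp.differentiable (by simp)
  have hf'd : Differentiable ℝ (deriv f) :=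
    (contDiff_infty_iff_deriv.1 hf).2.differentiable (by simp)
  obtain ⟨c, hvc⟩ : ∃ c, ∀ θ, v θ = c := ⟨v 0, fun θ => is_const_of_deriv_eq_zero hvd h3 θ 0⟩
  have hc : c ≠ 0 := fun h => hvne fun θ => (hvc θ).trans h
  obtain ⟨k, hk⟩ : ∃ k, ∀ θ, p θ = 2 * f θ + k := by
    refine ⟨p 0 - 2 * f 0, fun θ => ?_⟩
    have := is_const_of_deriv_eq_zero (hpd.sub (hfd.const_mul 2)) h1 θ 0
    simp only [Pi.sub_apply] at this
    linarith
  have hf'per : Function.Periodic (deriv f) (2 * π) := by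
    intro x
    rw [← deriv_comp_add_const, show (fun y => f (y + 2 * π)) = f from funext hfper]
  set g : ℝ → ℝ := fun x =>
    (deriv f x ^ 2 / 2 + f x ^ 3 / 3 + 2 * f x ^ 2 + (c ^ 2 + 2 * k) * f x) / c with hg
  have hgd : ∀ x, HasDerivAt g (deriv f x ^ 2) x := by
    intro x
    have a := (hfd x).hasDerivAt
    have b := (hf'd x).hasDerivAt
    have e := (((((b.pow 2).div_const 2).add ((a.pow 3).div_const 3)).add
      ((a.pow 2).const_mul 2)).add (a.const_mul (c ^ 2 + 2 * k))).div_const c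
    refine e.congr_deriv ?_
    have h := h2 x
    rw [hvc, hk] at h
    rw [div_eq_iff hc]
    push_cast
    norm_num
    linear_combination -(deriv f x) * h
  have hgm : Monotone g := monotone_of_deriv_nonneg (fun x => (hgd x).differentiableAt)
    fun x => by rw [(hgd x).deriv]; positivity
  have hgper : Function.Periodic g (2 * π) := fun x => by simp only [hg, hfper x, hf'per x]
  have hf' : ∀ x, deriv f x = 0 := by
    intro x
    have hconst : g = fun _ => g 0 :=
      funext fun y => hgm.eq_of_periodic hgper two_pi_pos y 0
    have h := (hgd x).deriv
    rw [hconst, deriv_const] at h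
    exact pow_eq_zero_iff (two_ne_zero) |>.1 h.symm
  have hfc : ∀ x, f x = f 0 := fun x => is_const_of_deriv_eq_zero hfd hf' x 0
  have hf0 : f 0 = 0 := by
    rw [intervalIntegral.integral_congr (g := fun _ => f 0) fun x _ => hfc x] at hflux
    simpa [pi_ne_zero] using hflux
  have hfz : ∀ x, f x = 0 := fun x => (hfc x).trans hf0
  refine ⟨hfz, ⟨c, hc, hvc⟩, fun θ => ?_⟩
  have h := h2 θ
  rw [show deriv f = fun _ => 0 from funext hf', deriv_const, hfz] at h
  linarith
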